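/- Stationary distributions of convex combinations of stochastic matrices are stable: let K, d ≥ 1, let φ^1,…,φ^K and χ^1,…,χ^K be d×d row-stochastic matrices, let w, w' ∈ Δ(K), and let p, p' ∈ Δ(d) satisfy p = (Σ_{k=1}^K w_k φ^k)^T p and p' = (Σ_{k=1}^K w'_k χ^k)^T p'. Then ‖p − p'‖_1² ≤ 2 Σ_{k=1}^K w_k ‖(φ^k)^T p − (χ^k)^T p'‖_1² + 2 ‖w − w'‖_1². -/

import Mathlib

open Finset

/-- A vector lies in the probability simplex `Δ(n)`. -/
def InSimplex (n : ℕ) (p : Fin n → ℝ) : Prop :=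
  (∀ i, 0 ≤ p i) ∧ ∑ i, p i = 1

/-- A matrix is row-stochastic if every row lies in the simplex. -/
def RowStochastic {d : ℕ} (φ : Matrix (Fin d) (Fin d) ℝ) : Prop :=
  ∀ i, (∀ j, 0 ≤ φ i j) ∧ ∑ j, φ i j = 1

/-! Put `a k = (φ k)ᵀ p` and `b k = (χ k)ᵀ p'`, so that `p = ∑ w k • a k` and `p' = ∑ w' k • b k`.
The telescoping identity `w a - w' b = w (a - b) + (w - w') b` and `‖b k‖₁ ≤ 1` bound `‖p - p'‖₁` by
`∑ w k ‖a k - b k‖₁ + ‖w - w'‖₁`. Now apply `(x + y)² ≤ 2 (x² + y²)`, and Jensen's inequality to the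
first sum. -/

open Matrix WithLp

section NormedSpace

variable {ι E : Type*} [SeminormedAddCommGroup E] [NormedSpace ℝ E] {s : Finset ι} {w w' : ι → ℝ}
  {a b : ι → E}

theorem norm_sum_smul_sub_sum_smul_le (hw : ∀ i ∈ s, 0 ≤ w i) (hb : ∀ i ∈ s, ‖b i‖ ≤ 1) :
    ‖∑ i ∈ s, w i • a i - ∑ i ∈ s, w' i • b i‖ ≤
      ∑ i ∈ s, w i * ‖a i - b i‖ + ∑ i ∈ s, |w i - w' i| := by
  have telescope : ∑ i ∈ s, w i • a i - ∑ i ∈ s, w' i • b i =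
      ∑ i ∈ s, w i • (a i - b i) + ∑ i ∈ s, (w i - w' i) • b i := by
    simp only [smul_sub, sub_smul, sum_sub_distrib]
    abel
  rw [telescope]
  refine norm_add_le_of_le (norm_sum_le_of_le s fun i hi ↦ ?_) (norm_sum_le_of_le s fun i hi ↦ ?_)
  · rw [norm_smul_of_nonneg (hw i hi)]
  · rw [norm_smul, Real.norm_eq_abs]
    exact mul_le_of_le_one_right (abs_nonneg _) (hb i hi)

theorem sq_norm_sum_smul_sub_sum_smul_le (hw : ∀ i ∈ s, 0 ≤ w i) (hw_sum : ∑ i ∈ s, w i = 1)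
    (hb : ∀ i ∈ s, ‖b i‖ ≤ 1) :
    ‖∑ i ∈ s, w i • a i - ∑ i ∈ s, w' i • b i‖ ^ 2 ≤
      2 * ∑ i ∈ s, w i * ‖a i - b i‖ ^ 2 + 2 * (∑ i ∈ s, |w i - w' i|) ^ 2 :=
  calc ‖∑ i ∈ s, w i • a i - ∑ i ∈ s, w' i • b i‖ ^ 2
    _ ≤ (∑ i ∈ s, w i * ‖a i - b i‖ + ∑ i ∈ s, |w i - w' i|) ^ 2 := by
      gcongr
      exact norm_sum_smul_sub_sum_smul_le hw hb
    _ ≤ 2 * (∑ i ∈ s, w i * ‖a i - b i‖) ^ 2 + 2 * (∑ i ∈ s, |w i - w' i|) ^ 2 :=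
      add_sq_le.trans_eq (mul_add _ _ _)
    _ ≤ 2 * ∑ i ∈ s, w i * ‖a i - b i‖ ^ 2 + 2 * (∑ i ∈ s, |w i - w' i|) ^ 2 := by
      gcongr
      exact Real.pow_arith_mean_le_arith_mean_pow_of_even s w _ hw hw_sum even_two

end NormedSpace

theorem norm_toLp_one_transpose_mulVec_le {m n R : Type*} [Fintype m] [Fintype n]
    [NonUnitalSeminormedRing R] {A : Matrix m n R} {c : ℝ} (hA : ∀ j, ∑ i, ‖A j i‖ ≤ c)
    (v : m → R) : ‖toLp 1 (Aᵀ *ᵥ v)‖ ≤ c * ‖toLp 1 v‖ := by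
  simp only [PiLp.norm_eq_of_L1]
  calc ∑ i, ‖∑ j, A j i * v j‖
    _ ≤ ∑ i, ∑ j, ‖A j i‖ * ‖v j‖ := by
      gcongr with i
      exact norm_sum_le_of_le _ fun j _ ↦ norm_mul_le _ _
    _ = ∑ j, (∑ i, ‖A j i‖) * ‖v j‖ := by
      rw [sum_comm]
      simp only [sum_mul]
    _ ≤ ∑ j, c * ‖v j‖ := by
      gcongr with j
      exact hA j
    _ = c * ∑ j, ‖v j‖ := (mul_sum _ _ _).symm

theorem transpose_sum_smul_mulVec {κ m n R S : Type*} [Fintype κ] [Fintype m]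
    [NonUnitalNonAssocSemiring R] [DistribSMul S R] [IsScalarTower S R R]
    (w : κ → S) (A : κ → Matrix m n R) (v : m → R) :
    (∑ k, w k • A k)ᵀ *ᵥ v = ∑ k, w k • (A k)ᵀ *ᵥ v := by
  simp only [transpose_sum, transpose_smul, sum_mulVec, smul_mulVec]

theorem stmt17_general {κ ι R : Type*} [Fintype κ] [Fintype ι] [NonUnitalSeminormedRing R]
    [NormedSpace ℝ R] [IsScalarTower ℝ R R] {φ χ : κ → Matrix ι ι R} {w w' : κ → ℝ} {p p' : ι → R}
    (hχ : ∀ k j, ∑ i, ‖χ k j i‖ ≤ 1) (hw : w ∈ stdSimplex ℝ κ) (hp' : ‖toLp 1 p'‖ ≤ 1)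
    (hstat : p = (∑ k, w k • φ k)ᵀ *ᵥ p) (hstat' : p' = (∑ k, w' k • χ k)ᵀ *ᵥ p') :
    ‖toLp 1 (p - p')‖ ^ 2 ≤
      2 * ∑ k, w k * ‖toLp 1 ((φ k)ᵀ *ᵥ p - (χ k)ᵀ *ᵥ p')‖ ^ 2 + 2 * ‖toLp 1 (w - w')‖ ^ 2 := by
  have hχp' (k : κ) : ‖toLp 1 ((χ k)ᵀ *ᵥ p')‖ ≤ 1 :=
    (norm_toLp_one_transpose_mulVec_le (hχ k) p').trans (by rwa [one_mul])
  have hp : toLp 1 p = ∑ k, w k • toLp 1 ((φ k)ᵀ *ᵥ p) := by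
    simpa only [toLp_sum, toLp_smul] using
      congrArg (toLp 1) (hstat.trans (transpose_sum_smul_mulVec w φ p))
  have hp'_eq : toLp 1 p' = ∑ k, w' k • toLp 1 ((χ k)ᵀ *ᵥ p') := by
    simpa only [toLp_sum, toLp_smul] using
      congrArg (toLp 1) (hstat'.trans (transpose_sum_smul_mulVec w' χ p'))
  have hww' : ‖toLp 1 (w - w')‖ = ∑ k, |w k - w' k| := PiLp.norm_eq_of_L1 _
  rw [hww', toLp_sub, hp, hp'_eq]
  exact sq_norm_sum_smul_sub_sum_smul_le (fun k _ ↦ hw.1 k) hw.2 fun k _ ↦ hχp' k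

theorem InSimplex.sum_norm_eq_one {n : ℕ} {p : Fin n → ℝ} (hp : InSimplex n p) :
    ∑ i, ‖p i‖ = 1 := by
  simp only [Real.norm_of_nonneg (hp.1 _), hp.2]

theorem transpose_sum_smul_mulVec_apply_eq_sum {κ m n R : Type*} [Fintype κ] [Fintype m]
    [NonUnitalNonAssocSemiring R] (w : κ → R) (A : κ → Matrix m n R) (v : m → R) (i : n) :
    ((∑ k, w k • A k)ᵀ *ᵥ v) i = ∑ j, (∑ k, w k * A k j i) * v j := by
  simp only [mulVec_apply_eq_sum, transpose_apply, Matrix.sum_apply, Matrix.smul_apply,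
    smul_eq_mul]

/-- Stationary distributions of convex combinations of stochastic matrices are
stable: if `p = (Σ_k w_k φ^k)^T p` and `p' = (Σ_k w'_k χ^k)^T p'`, then
`‖p − p'‖_1² ≤ 2 Σ_k w_k ‖(φ^k)^T p − (χ^k)^T p'‖_1² + 2 ‖w − w'‖_1²`. -/
theorem stmt17 (K d : ℕ) (hK : 1 ≤ K) (hd : 1 ≤ d)
    (φ χ : Fin K → Matrix (Fin d) (Fin d) ℝ)
    (hφ : ∀ k, RowStochastic (φ k)) (hχ : ∀ k, RowStochastic (χ k))
    (w w' : Fin K → ℝ) (hw : InSimplex K w) (hw' : InSimplex K w')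
    (p p' : Fin d → ℝ) (hp : InSimplex d p) (hp' : InSimplex d p')
    (hstat : ∀ i, p i = ∑ j, (∑ k, w k * φ k j i) * p j)
    (hstat' : ∀ i, p' i = ∑ j, (∑ k, w' k * χ k j i) * p' j) :
    (∑ i, |p i - p' i|) ^ 2 ≤
      2 * (∑ k, w k * (∑ i, |(∑ j, φ k j i * p j) - ∑ j, χ k j i * p' j|) ^ 2) +
      2 * (∑ k, |w k - w' k|) ^ 2 := by
  simpa only [PiLp.norm_eq_of_L1, Real.norm_eq_abs, Pi.sub_apply, mulVec_apply_eq_sum,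
    transpose_apply] using stmt17_general (φ := φ)
    (fun k j ↦ (InSimplex.sum_norm_eq_one (hχ k j)).le) hw
    ((PiLp.norm_eq_of_L1 _).trans_le hp'.sum_norm_eq_one.le)
    (funext fun i ↦ (hstat i).trans (transpose_sum_smul_mulVec_apply_eq_sum w φ p i).symm)
    (funext fun i ↦ (hstat' i).trans (transpose_sum_smul_mulVec_apply_eq_sum w' χ p' i).symm)
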